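/- arXiv:2111.12883 — 2 statements merged into one kernel-verified Lean document; each statement's English description precedes it below -/
import Mathlib

section
/- Let r, θ, γ, φ be real numbers with γ > 0, γ² > r² sin²θ, φ ∈ (−π/2, π/2) and sin φ = (r/γ) sin θ, and let H = [[r e^{iθ}, γ], [γ, r e^{−iθ}]]. Then H has the two real eigenvalues λ± = r cos θ ± γ cos φ = r cos θ ± √(γ² − r² sin²θ), with eigenvectors e₊ = (1/√2)·(e^{iφ/2}, e^{−iφ/2})ᵀ and e₋ = (1/√2)·(i e^{−iφ/2}, −i e^{iφ/2})ᵀ, i.e. H e₊ = λ₊ e₊ and H e₋ = λ₋ e₋. -/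
/-!
If `r sin θ = γ sin φ`, the sine terms of `r e^{iθ} + γ e^{-iφ}` cancel, leaving
`r cos θ + γ cos φ`. Multiplying by `e^{iφ/2}`, and using the same identity for `(-θ, -φ)`, gives
the two rows of the eigenvector equation for `λ₊`. The substitution `φ ↦ π - φ` preserves
`sin φ` and changes the sign of `cos φ`, so it turns the eigenpair `(λ₊, e₊)` into `(λ₋, e₋)`.
-/

open Matrix

/-- The matrix `[[r e^{iθ}, γ], [γ, r e^{-iθ}]]` of the qubit Hamiltonian, for complex
parameters. -/
noncomputable def qubitHamiltonian (r θ γ : ℂ) : Matrix (Fin 2) (Fin 2) ℂ :=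
  !![r * Complex.exp (Complex.I * θ), γ; γ, r * Complex.exp (-Complex.I * θ)]

/-- The vector `(e^{iφ/2}, e^{-iφ/2})ᵀ`, i.e. the eigenvector `e₊` without its normalization
`1/√2`. -/
noncomputable def phaseVector (φ : ℂ) : Fin 2 → ℂ :=
  ![Complex.exp (Complex.I * (φ / 2)), Complex.exp (-Complex.I * (φ / 2))]

theorem mul_exp_add_mul_exp_neg_of_mul_sin_eq {r θ γ φ : ℂ}
    (h : r * Complex.sin θ = γ * Complex.sin φ) :
    r * Complex.exp (Complex.I * θ) + γ * Complex.exp (-Complex.I * φ) =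
      r * Complex.cos θ + γ * Complex.cos φ := by
  rw [neg_mul, ← mul_neg, mul_comm Complex.I θ, mul_comm Complex.I (-φ), Complex.exp_mul_I,
    Complex.exp_mul_I, Complex.cos_neg, Complex.sin_neg]
  linear_combination Complex.I * h

theorem mul_exp_half_add_mul_exp_neg_half_of_mul_sin_eq {r θ γ φ : ℂ}
    (h : r * Complex.sin θ = γ * Complex.sin φ) :
    r * Complex.exp (Complex.I * θ) * Complex.exp (Complex.I * (φ / 2)) +
        γ * Complex.exp (-Complex.I * (φ / 2)) =
      (r * Complex.cos θ + γ * Complex.cos φ) * Complex.exp (Complex.I * (φ / 2)) := by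
  have exp_neg_half : Complex.exp (-Complex.I * (φ / 2)) =
      Complex.exp (-Complex.I * φ) * Complex.exp (Complex.I * (φ / 2)) := by
    rw [← Complex.exp_add]
    ring_nf
  rw [exp_neg_half, ← mul_assoc, ← add_mul, mul_exp_add_mul_exp_neg_of_mul_sin_eq h]

theorem qubitHamiltonian_mulVec_phaseVector {r θ γ φ : ℂ}
    (h : r * Complex.sin θ = γ * Complex.sin φ) :
    qubitHamiltonian r θ γ *ᵥ phaseVector φ =
      (r * Complex.cos θ + γ * Complex.cos φ) • phaseVector φ := by
  have h_neg : r * Complex.sin (-θ) = γ * Complex.sin (-φ) := by simp [h]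
  have first_row := mul_exp_half_add_mul_exp_neg_half_of_mul_sin_eq h
  have second_row := mul_exp_half_add_mul_exp_neg_half_of_mul_sin_eq h_neg
  simp only [neg_div, mul_neg, ← neg_mul, neg_neg, Complex.cos_neg] at second_row
  ext i
  fin_cases i
  · simpa [qubitHamiltonian, phaseVector, mul_comm] using first_row
  · simpa [qubitHamiltonian, phaseVector, mul_comm, add_comm] using second_row

theorem qubitHamiltonian_mulVec_phaseVector_pi_sub {r θ γ φ : ℂ}
    (h : r * Complex.sin θ = γ * Complex.sin φ) :
    qubitHamiltonian r θ γ *ᵥ phaseVector (Real.pi - φ) =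
      (r * Complex.cos θ - γ * Complex.cos φ) • phaseVector (Real.pi - φ) := by
  have h_sub : r * Complex.sin θ = γ * Complex.sin (Real.pi - φ) := by rwa [Complex.sin_pi_sub]
  simpa only [Complex.cos_pi_sub, mul_neg, ← sub_eq_add_neg] using
    qubitHamiltonian_mulVec_phaseVector h_sub

theorem phaseVector_pi_sub (φ : ℂ) :
    phaseVector (Real.pi - φ) =
      ![Complex.I * Complex.exp (-Complex.I * (φ / 2)),
        -Complex.I * Complex.exp (Complex.I * (φ / 2))] := by
  have exp_half : Complex.exp (Complex.I * ((Real.pi - φ) / 2)) =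
      Complex.I * Complex.exp (-Complex.I * (φ / 2)) := by
    nth_rw 2 [← Complex.exp_pi_div_two_mul_I]
    rw [← Complex.exp_add]
    ring_nf
  have exp_neg_half : Complex.exp (-Complex.I * ((Real.pi - φ) / 2)) =
      -Complex.I * Complex.exp (Complex.I * (φ / 2)) := by
    nth_rw 2 [← Complex.exp_neg_pi_div_two_mul_I]
    rw [← Complex.exp_add]
    ring_nf
  rw [phaseVector, exp_half, exp_neg_half]

theorem sqrt_sq_sub_mul_sin_sq (γ φ : ℝ) :
    √(γ ^ 2 - (γ * Real.sin φ) ^ 2) = |γ * Real.cos φ| := by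
  rw [← Real.sqrt_sq_eq_abs, mul_pow, mul_pow, Real.cos_sq', mul_sub, mul_one]

/-- Example 3.4: the non-Hermitian matrix `H = [[r e^{iθ}, γ], [γ, r e^{−iθ}]]` with
`γ² > r² sin²θ` and `sin φ = (r/γ) sin θ`, `|φ| < π/2`, has the two real eigenvalues
`λ± = r cos θ ± γ cos φ = r cos θ ± √(γ² − r² sin²θ)` with eigenvectors
`e₊ = (1/√2)(e^{iφ/2}, e^{−iφ/2})ᵀ` and `e₋ = (1/√2)(i e^{−iφ/2}, −i e^{iφ/2})ᵀ`. -/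
theorem nonHermitian_qubit_eigenvalues
    (r θ γ φ : ℝ) (hγ : 0 < γ)
    (hgap : r ^ 2 * Real.sin θ ^ 2 < γ ^ 2)
    (hφ₁ : -(Real.pi / 2) < φ) (hφ₂ : φ < Real.pi / 2)
    (hsinφ : Real.sin φ = (r / γ) * Real.sin θ)
    (Hm : Matrix (Fin 2) (Fin 2) ℂ)
    (hH : Hm = !![(r : ℂ) * Complex.exp (Complex.I * (θ : ℂ)), (γ : ℂ);
                  (γ : ℂ), (r : ℂ) * Complex.exp (-Complex.I * (θ : ℂ))]) :
    Real.sqrt (γ ^ 2 - r ^ 2 * Real.sin θ ^ 2) = γ * Real.cos φ ∧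
    Hm.mulVec ((((Real.sqrt 2)⁻¹ : ℝ) : ℂ) •
        ![Complex.exp (Complex.I * ((φ / 2 : ℝ) : ℂ)),
          Complex.exp (-Complex.I * ((φ / 2 : ℝ) : ℂ))])
      = (((r * Real.cos θ + γ * Real.cos φ : ℝ) : ℂ)) •
        ((((Real.sqrt 2)⁻¹ : ℝ) : ℂ) •
          ![Complex.exp (Complex.I * ((φ / 2 : ℝ) : ℂ)),
            Complex.exp (-Complex.I * ((φ / 2 : ℝ) : ℂ))]) ∧
    Hm.mulVec ((((Real.sqrt 2)⁻¹ : ℝ) : ℂ) •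
        ![Complex.I * Complex.exp (-Complex.I * ((φ / 2 : ℝ) : ℂ)),
          -Complex.I * Complex.exp (Complex.I * ((φ / 2 : ℝ) : ℂ))])
      = (((r * Real.cos θ - γ * Real.cos φ : ℝ) : ℂ)) •
        ((((Real.sqrt 2)⁻¹ : ℝ) : ℂ) •
          ![Complex.I * Complex.exp (-Complex.I * ((φ / 2 : ℝ) : ℂ)),
            -Complex.I * Complex.exp (Complex.I * ((φ / 2 : ℝ) : ℂ))]) := by
  have h_sin : r * Real.sin θ = γ * Real.sin φ := by
    rw [hsinφ]
    field_simp
  have h_sin_complex : (r : ℂ) * Complex.sin θ = γ * Complex.sin φ := by exact_mod_cast h_sin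
  have h_cos : 0 ≤ Real.cos φ := Real.cos_nonneg_of_mem_Icc ⟨hφ₁.le, hφ₂.le⟩
  have hHm : Hm = qubitHamiltonian r θ γ := hH
  refine ⟨?_, ?_, ?_⟩
  · rw [← mul_pow, h_sin, sqrt_sq_sub_mul_sin_sq, abs_of_nonneg (mul_nonneg hγ.le h_cos)]
  · rw [hHm, mulVec_smul, smul_comm]
    push_cast
    exact congrArg _ (qubitHamiltonian_mulVec_phaseVector h_sin_complex)
  · rw [hHm, mulVec_smul, smul_comm]
    push_cast
    rw [← phaseVector_pi_sub, qubitHamiltonian_mulVec_phaseVector_pi_sub h_sin_complex]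
end

section
/- Let ω be a real number with −π/2 < ω < π/2, let σᶻ_ω = (1/cos ω)·[[1, i sin ω], [i sin ω, −1]], and let G = (1/cos²ω)·[[1, i sin ω], [−i sin ω, 1]]. Then G is Hermitian positive-definite, and for every Hermitian positive-definite matrix S with S² = G one has S σᶻ_ω S⁻¹ = [[1, 0], [0, −1]]; in particular σᶻ_ω is a para-Hermitian matrix with eigenvalues 1 and −1. -/
open Matrix

open scoped ComplexOrder

/-!
Write `Z` for the undeformed matrix `diag(1, -1)` and `c = cos ω`. Two matrix identities carry the
whole example: `σᶻ_ω = c Z G` and `G Z G = c⁻² Z`. If `S² = G`, the second reads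
`S² Z S² = (c⁻¹)² Z`. The operator `U ↦ S U S` is positive semidefinite for the trace inner product,
so, since `c⁻¹ > 0`, the squares can be removed: `S Z S = c⁻¹ Z`. Hence
`S σᶻ_ω S⁻¹ = c S Z S² S⁻¹ = c S Z S = Z`, and no entry of `S` has to be computed.
The same identities give `(σᶻ_ω)² = 1`, and an involution of trace zero has both eigenvalues `±1`.
-/

section PosSemidef

variable {𝕜 m n : Type*} [RCLike 𝕜] [Fintype m] [Fintype n]

lemma trace_mul_nonneg_of_posSemidef {A B : Matrix n n 𝕜} (hA : A.PosSemidef)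
    (hB : B.PosSemidef) : 0 ≤ (A * B).trace := by
  classical
  open scoped MatrixOrder in
  obtain ⟨Y, rfl⟩ := CStarAlgebra.nonneg_iff_eq_star_mul_self.mp hB.nonneg
  rw [star_eq_conjTranspose, ← Matrix.mul_assoc, trace_mul_comm, ← Matrix.mul_assoc]
  exact (hA.mul_mul_conjTranspose_same Y).trace_nonneg

lemma eq_zero_of_mul_mul_eq_neg_smul_of_posSemidef {A : Matrix m m 𝕜} {B : Matrix n n 𝕜}
    (hA : A.PosSemidef) (hB : B.PosSemidef) {r : 𝕜} (hr : 0 < r) {V : Matrix m n 𝕜}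
    (hV : A * V * B = -(r • V)) : V = 0 := by
  have trace_eq : (Vᴴ * A * V * B).trace = -(r * (Vᴴ * V).trace) := by
    rw [Matrix.mul_assoc Vᴴ A, Matrix.mul_assoc Vᴴ, hV, Matrix.mul_neg, Matrix.mul_smul,
      trace_neg, trace_smul, smul_eq_mul]
  have lhs_nonneg : 0 ≤ (Vᴴ * A * V * B).trace :=
    trace_mul_nonneg_of_posSemidef (hA.conjTranspose_mul_mul_same V) hB
  have norm_nonneg : 0 ≤ (Vᴴ * V).trace := (posSemidef_conjTranspose_mul_self V).trace_nonneg
  have product_eq_zero : r * (Vᴴ * V).trace = 0 :=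
    le_antisymm (neg_nonneg.mp (trace_eq ▸ lhs_nonneg)) (mul_nonneg hr.le norm_nonneg)
  exact trace_conjTranspose_mul_self_eq_zero_iff.mp
    ((mul_eq_zero.mp product_eq_zero).resolve_left hr.ne')

lemma mul_mul_eq_smul_of_sq_of_posSemidef {A : Matrix m m 𝕜} {B : Matrix n n 𝕜}
    (hA : A.PosSemidef) (hB : B.PosSemidef) {r : 𝕜} (hr : 0 < r) {U : Matrix m n 𝕜}
    (hU : A * A * U * (B * B) = r ^ 2 • U) : A * U * B = r • U := by
  -- `T² - r² = (T + r)(T - r)` for `T U = A U B`, and `T + r` is injective.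
  refine sub_eq_zero.mp (eq_zero_of_mul_mul_eq_neg_smul_of_posSemidef hA hB hr ?_)
  calc A * (A * U * B - r • U) * B
      = A * A * U * (B * B) - r • (A * U * B) := by
        simp only [Matrix.mul_sub, Matrix.sub_mul, Matrix.mul_smul, Matrix.smul_mul,
          Matrix.mul_assoc]
    _ = -(r • (A * U * B - r • U)) := by
        rw [hU, smul_sub, smul_smul, neg_sub, pow_two]

lemma mul_inv_smul_mul_sq_mul_inv_of_posDef [DecidableEq n] {S Z : Matrix n n 𝕜} (hS : S.PosDef)
    {r : 𝕜} (hr : 0 < r) (hZ : S * S * Z * (S * S) = r ^ 2 • Z) :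
    S * (r⁻¹ • (Z * (S * S))) * S⁻¹ = Z := by
  have hdet : IsUnit S.det := (isUnit_iff_isUnit_det S).mp hS.isUnit
  calc S * (r⁻¹ • (Z * (S * S))) * S⁻¹
      = r⁻¹ • (S * Z * S * (S * S⁻¹)) := by
        simp only [Matrix.mul_smul, Matrix.smul_mul, Matrix.mul_assoc]
    _ = r⁻¹ • (r • Z) := by
        rw [mul_nonsing_inv S hdet, Matrix.mul_one,
          mul_mul_eq_smul_of_sq_of_posSemidef hS.posSemidef hS.posSemidef hr hZ]
    _ = Z := inv_smul_smul₀ hr.ne' Z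

end PosSemidef

section Involution

variable {R n : Type*} [Ring R] [Fintype n] [DecidableEq n]

lemma exists_mulVec_eq_self_of_mul_self_eq_one {A : Matrix n n R} (hA : A * A = 1)
    (hne : A ≠ -1) : ∃ v : n → R, v ≠ 0 ∧ A *ᵥ v = v := by
  obtain ⟨u, hu⟩ : ∃ u, (A + 1) *ᵥ u ≠ 0 := by
    by_contra! h
    exact hne (eq_neg_of_add_eq_zero_left (ext_of_mulVec_single fun i => by
      rw [h, zero_mulVec]))
  refine ⟨(A + 1) *ᵥ u, hu, ?_⟩
  rw [mulVec_mulVec, Matrix.mul_add, hA, Matrix.mul_one, add_comm]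

lemma ne_neg_one_of_trace_eq_zero [CharZero R] [Nonempty n] {A : Matrix n n R}
    (hA : A.trace = 0) : A ≠ -1 := by
  rintro rfl
  simp at hA

end Involution

/-- The undeformed Pauli matrix `σᶻ`, to which `σᶻ_ω` is similar. -/
def pauliZ : Matrix (Fin 2) (Fin 2) ℂ :=
  !![1, 0; 0, -1]

/-- The deformed Pauli matrix `σᶻ_ω`. At `cos ω = 0` it takes the junk value `0`. -/
noncomputable def deformedPauliZ (ω : ℝ) : Matrix (Fin 2) (Fin 2) ℂ :=
  (((Real.cos ω)⁻¹ : ℝ) : ℂ) •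
    !![1, Complex.I * ((Real.sin ω : ℝ) : ℂ); Complex.I * ((Real.sin ω : ℝ) : ℂ), -1]

/-- The metric operator `G` of `σᶻ_ω`: the sum of `|e*⟩⟨e*|` over its two dual eigenvectors,
written out in coordinates. At `cos ω = 0` it takes the junk value `0`. -/
noncomputable def deformedPauliZMetric (ω : ℝ) : Matrix (Fin 2) (Fin 2) ℂ :=
  ((((Real.cos ω) ^ 2)⁻¹ : ℝ) : ℂ) •
    !![1, Complex.I * ((Real.sin ω : ℝ) : ℂ); -Complex.I * ((Real.sin ω : ℝ) : ℂ), 1]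

lemma pauliZ_mul_self : pauliZ * pauliZ = 1 := by
  simp [pauliZ, one_fin_two]

lemma trace_deformedPauliZ (ω : ℝ) : (deformedPauliZ ω).trace = 0 := by
  simp [deformedPauliZ, trace_fin_two]

lemma deformedPauliZ_eq_smul_pauliZ_mul_metric (ω : ℝ) :
    deformedPauliZ ω = (Real.cos ω : ℂ) • (pauliZ * deformedPauliZMetric ω) := by
  have cos_mul_inv_sq : (Real.cos ω : ℂ) * ((Real.cos ω ^ 2)⁻¹ : ℝ) = ((Real.cos ω)⁻¹ : ℝ) := by
    push_cast
    field_simp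
  rw [deformedPauliZMetric, Matrix.mul_smul, smul_smul, cos_mul_inv_sq, deformedPauliZ]
  simp [pauliZ]

lemma deformedPauliZMetric_mul_pauliZ_mul_self (ω : ℝ) :
    deformedPauliZMetric ω * pauliZ * deformedPauliZMetric ω =
      (Real.cos ω : ℂ)⁻¹ ^ 2 • pauliZ := by
  have one_sub_sin_sq : (1 : ℂ) - Real.sin ω ^ 2 = Real.cos ω ^ 2 := by
    exact_mod_cast (Real.cos_sq' ω).symm
  have unscaled (s : ℂ) :
      !![1, Complex.I * s; -Complex.I * s, 1] * pauliZ * !![1, Complex.I * s; -Complex.I * s, 1] =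
        (1 - s ^ 2) • pauliZ := by
    have I_mul_sq : Complex.I * s * (Complex.I * s) = -s ^ 2 := by
      linear_combination s ^ 2 * Complex.I_sq
    ext i j
    fin_cases i <;> fin_cases j <;> simp [pauliZ, I_mul_sq, sub_eq_add_neg, add_comm]
  rw [deformedPauliZMetric, Matrix.smul_mul, Matrix.smul_mul, Matrix.mul_smul, unscaled,
    one_sub_sin_sq, smul_smul, smul_smul]
  congr 1
  push_cast
  field_simp

lemma deformedPauliZ_mul_self {ω : ℝ} (hω : Real.cos ω ≠ 0) :
    deformedPauliZ ω * deformedPauliZ ω = 1 := by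
  have cos_ne_zero : (Real.cos ω : ℂ) ≠ 0 := Complex.ofReal_ne_zero.mpr hω
  rw [deformedPauliZ_eq_smul_pauliZ_mul_metric]
  set G := deformedPauliZMetric ω with hG
  set c := (Real.cos ω : ℂ)
  calc c • (pauliZ * G) * c • (pauliZ * G)
      = c ^ 2 • (pauliZ * (G * pauliZ * G)) := by
        simp only [Matrix.smul_mul, Matrix.mul_smul, smul_smul, pow_two, Matrix.mul_assoc]
    _ = c ^ 2 • (c⁻¹ ^ 2 • (pauliZ * pauliZ)) := by
        rw [hG, deformedPauliZMetric_mul_pauliZ_mul_self, Matrix.mul_smul]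
    _ = 1 := by
        rw [pauliZ_mul_self, inv_pow, smul_inv_smul₀ (pow_ne_zero 2 cos_ne_zero)]

lemma posSemidef_fin_two_sq_add_sq (a b : ℝ) :
    (!![((a ^ 2 + b ^ 2 : ℝ) : ℂ), Complex.I * ((2 * b * a : ℝ) : ℂ);
      -Complex.I * ((2 * b * a : ℝ) : ℂ), ((a ^ 2 + b ^ 2 : ℝ) : ℂ)]).PosSemidef := by
  let R : Matrix (Fin 2) (Fin 2) ℂ := !![(a : ℂ), Complex.I * b; -Complex.I * b, a]
  have I_mul_sq : Complex.I * b * (Complex.I * b) = -b ^ 2 := by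
    linear_combination (b : ℂ) ^ 2 * Complex.I_sq
  convert posSemidef_conjTranspose_mul_self R using 1
  ext i j
  fin_cases i <;> fin_cases j <;> simp [R, mul_apply, Fin.sum_univ_two, I_mul_sq] <;> ring

lemma posSemidef_deformedPauliZMetric (ω : ℝ) : (deformedPauliZMetric ω).PosSemidef := by
  have sin_eq : 2 * Real.sin (ω / 2) * Real.cos (ω / 2) = Real.sin ω := by
    rw [← Real.sin_two_mul, mul_div_cancel₀ ω two_ne_zero]
  -- Half angles make the Hermitian factor an explicit square root of `cos² ω • G`.
  have unscaled := posSemidef_fin_two_sq_add_sq (Real.cos (ω / 2)) (Real.sin (ω / 2))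
  rw [Real.cos_sq_add_sin_sq, sin_eq, Complex.ofReal_one] at unscaled
  refine unscaled.smul ?_
  exact_mod_cast inv_nonneg.mpr (sq_nonneg (Real.cos ω))

lemma posDef_deformedPauliZMetric {ω : ℝ} (hω : Real.cos ω ≠ 0) :
    (deformedPauliZMetric ω).PosDef := by
  refine (posSemidef_deformedPauliZMetric ω).posDef_iff_isUnit.mpr ?_
  have left_inv : deformedPauliZ ω * ((Real.cos ω : ℂ) • pauliZ) * deformedPauliZMetric ω = 1 := by
    rw [Matrix.mul_assoc, Matrix.smul_mul, ← deformedPauliZ_eq_smul_pauliZ_mul_metric,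
      deformedPauliZ_mul_self hω]
  exact .of_mul_eq_one_right _ left_inv

lemma mul_deformedPauliZ_mul_inv_of_posDef {ω : ℝ} (hω : 0 < Real.cos ω)
    {S : Matrix (Fin 2) (Fin 2) ℂ} (hS : S.PosDef) (hSS : S * S = deformedPauliZMetric ω) :
    S * deformedPauliZ ω * S⁻¹ = pauliZ := by
  have inv_cos_pos : 0 < (Real.cos ω : ℂ)⁻¹ := by
    exact_mod_cast inv_pos.mpr hω
  have intertwine : S * S * pauliZ * (S * S) = (Real.cos ω : ℂ)⁻¹ ^ 2 • pauliZ := by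
    rw [hSS, deformedPauliZMetric_mul_pauliZ_mul_self]
  have conj_eq := mul_inv_smul_mul_sq_mul_inv_of_posDef hS inv_cos_pos intertwine
  rwa [inv_inv, hSS, ← deformedPauliZ_eq_smul_pauliZ_mul_metric] at conj_eq

/-- Example 3.3 for `σᶻ_ω`: the matrix `G = (1/cos²ω)[[1, i sin ω],[−i sin ω, 1]]` is
Hermitian positive-definite, and for every Hermitian positive-definite `S` with `S² = G`
one has `S σᶻ_ω S⁻¹ = diag(1, −1)`; in particular `σᶻ_ω` is para-Hermitian with
eigenvalues `1` and `−1`. -/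
theorem deformed_pauli_z_paraHermitian
    (ω : ℝ) (hω₁ : -(Real.pi / 2) < ω) (hω₂ : ω < Real.pi / 2)
    (σz G : Matrix (Fin 2) (Fin 2) ℂ)
    (hz : σz = (((Real.cos ω)⁻¹ : ℝ) : ℂ) •
        !![1, Complex.I * ((Real.sin ω : ℝ) : ℂ); Complex.I * ((Real.sin ω : ℝ) : ℂ), -1])
    (hG : G = ((((Real.cos ω) ^ 2)⁻¹ : ℝ) : ℂ) •
        !![1, Complex.I * ((Real.sin ω : ℝ) : ℂ); -Complex.I * ((Real.sin ω : ℝ) : ℂ), 1]) :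
    G.IsHermitian ∧ G.PosDef ∧
    (∀ S : Matrix (Fin 2) (Fin 2) ℂ, S.IsHermitian → S.PosDef → S * S = G →
      S * σz * S⁻¹ = !![1, 0; 0, -1]) ∧
    (∃ v : Fin 2 → ℂ, v ≠ 0 ∧ σz.mulVec v = v) ∧
    (∃ w : Fin 2 → ℂ, w ≠ 0 ∧ σz.mulVec w = -w) := by
  obtain rfl : σz = deformedPauliZ ω := hz
  obtain rfl : G = deformedPauliZMetric ω := hG
  have cos_pos : 0 < Real.cos ω := Real.cos_pos_of_mem_Ioo ⟨hω₁, hω₂⟩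
  have metric_posDef := posDef_deformedPauliZMetric cos_pos.ne'
  have mul_self := deformedPauliZ_mul_self cos_pos.ne'
  have trace_eq_zero := trace_deformedPauliZ ω
  refine ⟨metric_posDef.isHermitian, metric_posDef,
    fun S _ hS hSS => mul_deformedPauliZ_mul_inv_of_posDef cos_pos hS hSS,
    exists_mulVec_eq_self_of_mul_self_eq_one mul_self (ne_neg_one_of_trace_eq_zero trace_eq_zero),
    ?_⟩
  obtain ⟨w, w_ne_zero, hw⟩ := exists_mulVec_eq_self_of_mul_self_eq_one
    (A := -deformedPauliZ ω) (by rw [neg_mul_neg, mul_self])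
    (ne_neg_one_of_trace_eq_zero (by rw [trace_neg, trace_eq_zero, neg_zero]))
  exact ⟨w, w_ne_zero, neg_eq_iff_eq_neg.mp (by rwa [neg_mulVec] at hw)⟩
end
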